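/- Let $R$ be a commutative Noetherian ring, $I$ an ideal such that the category of $I$-cofinite modules is closed under kernels and cokernels, $M$ an $I$-cofinite $R$-module, and $N$ a finitely generated $R$-module. Then $\mathrm{Tor}_i^R(N, M)$ and $\mathrm{Ext}^i_R(N, M)$ are $I$-cofinite for all $i \ge 0$. -/

import Mathlib

open CategoryTheory

/-- An `R`-module `X` is `I`-cofinite if its support is contained in `V(I)` and
`Ext^i_R(R/I, X)` is a finitely generated `R`-module for every `i ≥ 0`. -/
def IsCofinite (R : Type) [CommRing R] (I : Ideal R)
    (X : Type) [AddCommGroup X] [Module R X] : Prop :=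
  Module.support R X ⊆ PrimeSpectrum.zeroLocus (I : Set R) ∧
  ∀ i : ℕ, Module.Finite R
    (((Ext R (ModuleCat R) i).obj (Opposite.op (ModuleCat.of R (R ⧸ I)))).obj
      (ModuleCat.of R X))

/-!
Only three closure properties of the class `P` of cofinite modules matter: kernels, cokernels
and finite products. The last one holds because `Ext` is additive in its second variable.

For `Ext`, resolve `N` by finitely generated projectives `Q_j`. The terms `Hom(Q_j, M)` lie in `P`
because `Q_j` is finitely presented and `Hom(R^k, M) = M^k`, and homology is a cokernel of a map
into a kernel.

`Tor` is computed from a projective resolution of `M`, whose terms need not lie in `P`, so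
the argument shifts dimension in `N` instead: for `0 → K → R^k → N → 0` the flatness of `R^k` makes
`Tor_{i+1}(N, M)` the kernel of `Tor_i(K, M) → Tor_i(R^k, M)`, starting from `N ⊗ M`, a cokernel
of a map between powers of `M`.
-/

open Limits MonoidalCategory Opposite
open scoped TensorProduct

universe w v u v' u'

section MapComplex

variable {C : Type u} [Category.{v} C] [Preadditive C]
  {D : Type u'} [Category.{v'} D] [Preadditive D]

/-- The short complex of complexes `T.X₁(K) ⟶ T.X₂(K) ⟶ T.X₃(K)` obtained by applying a short
complex `T` of additive functors termwise to a complex `K`. -/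
def mapComplexShortComplex {ι : Type*} {c : ComplexShape ι} (T : ShortComplex (C ⥤ D))
    [T.X₁.Additive] [T.X₂.Additive] [T.X₃.Additive] (K : HomologicalComplex C c) :
    ShortComplex (HomologicalComplex D c) where
  X₁ := (T.X₁.mapHomologicalComplex c).obj K
  X₂ := (T.X₂.mapHomologicalComplex c).obj K
  X₃ := (T.X₃.mapHomologicalComplex c).obj K
  f := (NatTrans.mapHomologicalComplex T.f c).app K
  g := (NatTrans.mapHomologicalComplex T.g c).app K
  zero := by
    ext j
    exact NatTrans.congr_app T.zero (K.X j)

end MapComplex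

section LeftDerived

variable {C : Type u} [Category.{v} C] [Abelian C] [HasProjectiveResolutions C]
  {D : Type u'} [Category.{v'} D] [Abelian D]

theorem leftDerived_add {F G : C ⥤ D} [F.Additive] [G.Additive] (α β : F ⟶ G) (n : ℕ) :
    NatTrans.leftDerived (α + β) n = NatTrans.leftDerived α n + NatTrans.leftDerived β n := by
  ext X
  have hadd : (NatTrans.mapHomologicalComplex (α + β) _).app (projectiveResolution X).complex =
      (NatTrans.mapHomologicalComplex α _).app (projectiveResolution X).complex +
        (NatTrans.mapHomologicalComplex β _).app (projectiveResolution X).complex := rfl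
  simp only [NatTrans.app_add, (projectiveResolution X).leftDerived_app_eq, hadd,
    Functor.map_add, Preadditive.comp_add, Preadditive.add_comp]

theorem isZero_leftDerived_obj_succ (F : C ⥤ D) [F.Additive] [F.PreservesHomology] (X : C)
    (n : ℕ) : IsZero ((F.leftDerived (n + 1)).obj X) := by
  let Q := projectiveResolution X
  have hexact : ((F.mapHomologicalComplex _).obj Q.complex).ExactAt (n + 1) :=
    (Q.complex_exactAt_succ n).map F
  exact hexact.isZero_homology.of_iso (Q.isoLeftDerivedObj F (n + 1))

end LeftDerived

section ObjectProperty

instance {C : Type u} [Category.{v} C] [HasZeroMorphisms C] (P : ObjectProperty C)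
    [P.IsClosedUnderKernels] : P.IsClosedUnderIsomorphisms where
  of_iso {X _} e hX :=
    P.prop_of_isLimit_kernelFork (f := (0 : X ⟶ X))
      (KernelFork.IsLimit.ofι e.inv comp_zero (fun k _ => k ≫ e.hom) (by simp)
        (by simp [← cancel_mono e.inv])) hX hX

instance {C : Type u} [Category.{v} C] [HasTerminal C] (P : ObjectProperty C)
    [P.IsClosedUnderFiniteProducts] : P.IsClosedUnderIsomorphisms :=
  ObjectProperty.IsClosedUnderBinaryProducts.closedUnderIsomorphisms P

variable {C : Type u} [Category.{v} C] [Abelian C] (P : ObjectProperty C)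
  [P.IsClosedUnderKernels]

theorem prop_homology [P.IsClosedUnderCokernels] {S : ShortComplex C}
    (h₁ : P S.X₁) (h₂ : P S.X₂) (h₃ : P S.X₃) : P S.homology :=
  P.prop_of_isColimit_cokernelCofork S.homologyIsCokernel h₁
    (P.prop_of_isLimit_kernelFork S.cyclesIsKernel h₂ h₃)

theorem prop_homology_X₃_of_shortExact {ι : Type*} {c : ComplexShape ι}
    {S : ShortComplex (HomologicalComplex C c)} (hS : S.ShortExact) {i j : ι} (hij : c.Rel i j)
    (hzero : IsZero (S.X₂.homology i)) (h₁ : P (S.X₁.homology j)) (h₂ : P (S.X₂.homology j)) :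
    P (S.X₃.homology i) :=
  have := hS.mono_δ i j hij hzero
  P.prop_of_isLimit_kernelFork (hS.homology_exact₁ i j hij).fIsKernel h₁ h₂

theorem prop_leftDerived_succ
    {B : Type u'} [Category.{v'} B] [Abelian B] [HasProjectiveResolutions B]
    (T : ShortComplex (B ⥤ C)) [T.X₁.Additive] [T.X₂.Additive] [T.X₃.Additive]
    [T.X₂.PreservesHomology]
    (hT : ∀ (Q : B) [Projective Q], (T.map ((evaluation B C).obj Q)).ShortExact)
    {X : B} {n : ℕ} (h₁ : P ((T.X₁.leftDerived n).obj X)) (h₂ : P ((T.X₂.leftDerived n).obj X)) :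
    P ((T.X₃.leftDerived (n + 1)).obj X) := by
  let Q := projectiveResolution X
  have hS : (mapComplexShortComplex T Q.complex).ShortExact :=
    HomologicalComplex.shortExact_of_degreewise_shortExact _ fun j => hT (Q.complex.X j)
  refine P.prop_of_iso (Q.isoLeftDerivedObj T.X₃ (n + 1)).symm
    (prop_homology_X₃_of_shortExact P hS (ComplexShape.down_mk (n + 1) n rfl) ?_
      (P.prop_of_iso (Q.isoLeftDerivedObj T.X₁ n) h₁)
      (P.prop_of_iso (Q.isoLeftDerivedObj T.X₂ n) h₂))
  exact (isZero_leftDerived_obj_succ T.X₂ X n).of_iso (Q.isoLeftDerivedObj T.X₂ (n + 1)).symm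

end ObjectProperty

section Ext

variable {R : Type w} [Ring R] {C : Type u} [Category.{v} C] [Abelian C] [Linear R C]
  [EnoughProjectives C]

instance ext_obj_additive (n : ℕ) (X : Cᵒᵖ) : ((Ext R C n).obj X).Additive where
  map_add := by
    intro _ _ f g
    have hyoneda : NatTrans.rightOp ((linearYoneda R C).map (f + g)) =
        NatTrans.rightOp ((linearYoneda R C).map f) +
          NatTrans.rightOp ((linearYoneda R C).map g) := by
      ext Z
      refine Quiver.Hom.unop_inj ?_
      ext h
      exact Preadditive.comp_add _ _ _ h f g
    have hderived := NatTrans.congr_app (congrArg (NatTrans.leftDerived · n) hyoneda |>.trans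
      (leftDerived_add _ _ n)) X.unop
    exact congrArg Quiver.Hom.unop hderived

theorem prop_ext_of_projectiveResolution (P : ObjectProperty (ModuleCat.{v} R))
    [P.IsClosedUnderKernels] [P.IsClosedUnderCokernels] {X Y : C} (Q : ProjectiveResolution X)
    (hQ : ∀ j, P (ModuleCat.of R (Q.complex.X j ⟶ Y))) (n : ℕ) :
    P (((Ext R C n).obj (op X)).obj Y) :=
  P.prop_of_iso (Q.isoExt n Y).symm (prop_homology P (hQ _) (hQ _) (hQ _))

end Ext

section FGModuleCat

variable {R : Type u} [CommRing R]

instance (X : Type u) [AddCommGroup X] [Module R X] [Module.Finite R X] [Module.Projective R X] :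
    Projective (FGModuleCat.of R X) :=
  (forget₂ (FGModuleCat R) (ModuleCat R)).projective_of_map_projective
    ((IsProjective.iff_projective X).1 inferInstance)

theorem exists_epi_from_fin (X : FGModuleCat.{u} R) :
    ∃ (n : ℕ) (f : FGModuleCat.of R (Fin n → R) ⟶ X), Epi f := by
  obtain ⟨n, f, hf⟩ := Module.Finite.exists_fin' R X
  exact ⟨n, FGModuleCat.ofHom f, (forget₂ (FGModuleCat R) (ModuleCat R)).epi_of_epi_map
    ((ModuleCat.epi_iff_surjective _).2 hf)⟩

instance : EnoughProjectives (FGModuleCat.{u} R) where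
  presentation X := by
    obtain ⟨n, f, hf⟩ := exists_epi_from_fin X
    exact ⟨{ p := FGModuleCat.of R (Fin n → R), f := f }⟩

instance : (forget₂ (FGModuleCat.{u} R) (ModuleCat.{u} R)).PreservesProjectiveObjects where
  projective_obj {X} _ := by
    obtain ⟨n, f, hf⟩ := exists_epi_from_fin X
    have hfree : Projective ((forget₂ (FGModuleCat R) (ModuleCat R)).obj
        (FGModuleCat.of R (Fin n → R))) :=
      (IsProjective.iff_projective (Fin n → R)).1 inferInstance
    have retract : Retract X (FGModuleCat.of R (Fin n → R)) :=
      ⟨Projective.factorThru (𝟙 X) f, f, Projective.factorThru_comp _ _⟩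
    exact (retract.map (forget₂ (FGModuleCat R) (ModuleCat R))).projective

end FGModuleCat

section Tensor

variable {C : Type u} [Category.{v} C] [Preadditive C] [MonoidalCategory C] [MonoidalPreadditive C]

instance tensoringLeft_preservesZeroMorphisms : (tensoringLeft C).PreservesZeroMorphisms where
  map_zero _ _ := NatTrans.ext (funext fun _ => MonoidalPreadditive.zero_whiskerRight)

end Tensor

section ModuleCat

variable {R : Type u} [CommRing R] (P : ObjectProperty (ModuleCat.{u} R))

theorem prop_pi [P.IsClosedUnderFiniteProducts] {M : Type u} [AddCommGroup M] [Module R M]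
    (hM : P (ModuleCat.of R M)) (n : ℕ) : P (ModuleCat.of R (Fin n → M)) :=
  P.prop_of_isLimit_fan (ModuleCat.productConeIsLimit fun _ : Fin n => ModuleCat.of R M)
    fun _ => hM

theorem prop_tor_succ_of_shortExact [P.IsClosedUnderKernels]
    {S : ShortComplex (ModuleCat.{u} R)} (hS : S.ShortExact) [Module.Flat R S.X₂]
    {Y : ModuleCat.{u} R} {n : ℕ} (h₁ : P (((Tor (ModuleCat R) n).obj S.X₁).obj Y))
    (h₂ : P (((Tor (ModuleCat R) n).obj S.X₂).obj Y)) :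
    P (((Tor (ModuleCat R) (n + 1)).obj S.X₃).obj Y) := by
  let T : ShortComplex (ModuleCat.{u} R ⥤ ModuleCat.{u} R) :=
    S.map (tensoringLeft (ModuleCat R))
  have : T.X₁.Additive := tensoringLeft_additive S.X₁
  have : T.X₂.Additive := tensoringLeft_additive S.X₂
  have : T.X₃.Additive := tensoringLeft_additive S.X₃
  have : T.X₂.PreservesHomology := inferInstanceAs (tensorLeft S.X₂).PreservesHomology
  refine prop_leftDerived_succ P T (fun Q _ => ?_) h₁ h₂
  have : Module.Projective R Q := (IsProjective.iff_projective Q).2 inferInstance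
  exact hS.map_of_exact (tensorRight Q)

variable [P.IsClosedUnderFiniteProducts]
  {M : Type u} [AddCommGroup M] [Module R M] (hM : P (ModuleCat.of R M))
  (N : Type u) [AddCommGroup N] [Module R N]

include hM

theorem prop_linearMap [P.IsClosedUnderKernels] [Module.FinitePresentation R N] :
    P (ModuleCat.of R (N →ₗ[R] M)) := by
  obtain ⟨n, m, g, f, hg, hfg⟩ := Module.FinitePresentation.exists_fin' R N
  have hfree (k : ℕ) : P (ModuleCat.of R ((Fin k → R) →ₗ[R] M)) :=
    P.prop_of_iso ((Pi.basisFun R (Fin k)).constr R).toModuleIso (prop_pi P hM k)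
  exact P.prop_of_isLimit_kernelFork
    (ModuleCat.isLimitKernelFork _ _ (LinearMap.exact_lcomp_of_exact_of_surjective M hfg hg)
      (LinearMap.lcomp_injective_of_surjective g hg)) (hfree n) (hfree m)

theorem prop_tensorProduct [P.IsClosedUnderCokernels] [Module.FinitePresentation R N] :
    P (ModuleCat.of R (N ⊗[R] M)) := by
  obtain ⟨n, m, g, f, hg, hfg⟩ := Module.FinitePresentation.exists_fin' R N
  have hfree (k : ℕ) : P (ModuleCat.of R ((Fin k → R) ⊗[R] M)) :=
    P.prop_of_iso (TensorProduct.comm R _ _ ≪≫ₗ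
      TensorProduct.piScalarRight R R M (Fin k)).symm.toModuleIso (prop_pi P hM k)
  exact P.prop_of_isColimit_cokernelCofork
    (ModuleCat.isColimitCokernelCofork _ _ (rTensor_exact M hfg hg)
      (LinearMap.rTensor_surjective M hg)) (hfree m) (hfree n)

variable [IsNoetherianRing R] [Module.Finite R N] [P.IsClosedUnderKernels]
  [P.IsClosedUnderCokernels]

theorem prop_ext (n : ℕ) :
    P (((Ext R (ModuleCat R) n).obj (op (ModuleCat.of R N))).obj (ModuleCat.of R M)) := by
  let Q := projectiveResolution (FGModuleCat.of R N)
  refine prop_ext_of_projectiveResolution P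
    ((forget₂ (FGModuleCat R) (ModuleCat R)).mapProjectiveResolution Q) (fun j => ?_) n
  have := Module.finitePresentation_of_finite R (Q.complex.X j)
  exact P.prop_of_iso (ModuleCat.homLinearEquiv (S := R)).symm.toModuleIso
    (prop_linearMap P hM (Q.complex.X j))

theorem prop_tor (n : ℕ) :
    P (((Tor (ModuleCat R) n).obj (ModuleCat.of R N)).obj (ModuleCat.of R M)) := by
  induction n generalizing N with
  | zero =>
    have := Module.finitePresentation_of_finite R N
    exact P.prop_of_iso ((tensorLeft (ModuleCat.of R N)).leftDerivedZeroIsoSelf.app _).symm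
      (prop_tensorProduct P hM N)
  | succ n ih =>
    obtain ⟨k, g, hg⟩ := Module.Finite.exists_fin' R N
    have : Module.Flat R g.shortComplexKer.X₂ := inferInstanceAs (Module.Flat R (Fin k → R))
    exact prop_tor_succ_of_shortExact P (LinearMap.shortExact_shortComplexKer hg)
      (ih (LinearMap.ker g)) (ih (Fin k → R))

end ModuleCat

theorem finite_obj_prod {R : Type u} [Ring R] {S : Type u'} [Ring S]
    (G : ModuleCat.{v} R ⥤ ModuleCat.{v'} S) [G.Additive] (X Y : ModuleCat.{v} R)
    [Module.Finite S (G.obj X)] [Module.Finite S (G.obj Y)] :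
    Module.Finite S (G.obj (ModuleCat.of R (X × Y))) :=
  have := preservesBinaryBiproducts_of_preservesBiproducts G
  Module.Finite.equiv (G.mapIso (ModuleCat.biprodIsoProd X Y).symm ≪≫ G.mapBiprod X Y ≪≫
    ModuleCat.biprodIsoProd _ _).symm.toLinearEquiv

section Cofinite

variable {R : Type} [CommRing R] (I : Ideal R)

/-- The `I`-cofinite modules as a class of objects of the category of `R`-modules. -/
def isCofinite : ObjectProperty (ModuleCat.{0} R) :=
  fun X => IsCofinite R I X

instance : (isCofinite I).IsClosedUnderIsomorphisms where
  of_iso e hX := by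
    refine ⟨e.toLinearEquiv.support_eq ▸ hX.1, fun i => ?_⟩
    have := hX.2 i
    exact Module.Finite.equiv (((Ext R (ModuleCat R) i).obj _).mapIso e).toLinearEquiv

instance : (isCofinite I).ContainsZero where
  exists_zero := by
    have hzero : IsZero (ModuleCat.of R PUnit) := ModuleCat.isZero_of_subsingleton _
    refine ⟨_, hzero, by simp [Module.support_eq_empty], fun i => ?_⟩
    have := ModuleCat.subsingleton_of_isZero
      (((Ext R (ModuleCat R) i).obj (op (ModuleCat.of R (R ⧸ I)))).map_isZero hzero)
    infer_instance

variable {I} in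
theorem isCofinite_prod {X Y : ModuleCat.{0} R} (hX : isCofinite I X) (hY : isCofinite I Y) :
    isCofinite I (ModuleCat.of R (X × Y)) := by
  refine ⟨?_, fun i => ?_⟩
  · rw [Module.support_of_exact (Function.Exact.inl_snd (R := R)) LinearMap.inl_injective
      LinearMap.snd_surjective]
    exact Set.union_subset hX.1 hY.1
  · have := hX.2 i
    have := hY.2 i
    exact finite_obj_prod _ X Y

instance : (isCofinite I).IsClosedUnderBinaryProducts where
  limitsOfShape_le := by
    rintro Z ⟨p⟩
    refine (isCofinite I).prop_of_iso ?_
      (isCofinite_prod (p.prop_diag_obj (.mk .left)) (p.prop_diag_obj (.mk .right)))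
    exact (ModuleCat.binaryProductLimitCone _ _).isLimit.conePointUniqueUpToIso
      ((IsLimit.postcomposeHomEquiv (diagramIsoPair p.diag) _).2 p.isLimit)

instance : (isCofinite I).IsClosedUnderFiniteProducts := .mk'

end Cofinite

section Closure

variable {R : Type u} [Ring R] {P : ObjectProperty (ModuleCat.{v} R)}
  [P.IsClosedUnderIsomorphisms]

theorem isClosedUnderKernels_of_ker
    (h : ∀ ⦃X Y : ModuleCat.{v} R⦄ (f : X ⟶ Y), P X → P Y →
      P (ModuleCat.of R (LinearMap.ker f.hom))) : P.IsClosedUnderKernels where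
  kernels_le := by
    rintro _ ⟨f, k, hk, hf⟩
    exact P.prop_of_iso ((ModuleCat.kernelIsLimit f).conePointUniqueUpToIso hk) (h f hf.1 hf.2)

theorem isClosedUnderCokernels_of_quotient_range
    (h : ∀ ⦃X Y : ModuleCat.{v} R⦄ (f : X ⟶ Y), P X → P Y →
      P (ModuleCat.of R (Y ⧸ LinearMap.range f.hom))) : P.IsClosedUnderCokernels where
  cokernels_le := by
    rintro _ ⟨f, k, hk, hf⟩
    exact P.prop_of_iso ((ModuleCat.cokernelIsColimit f).coconePointUniqueUpToIso hk)
      (h f hf.1 hf.2)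

end Closure

theorem stmt_18_general {R : Type u} [CommRing R] [IsNoetherianRing R]
    (P : ObjectProperty (ModuleCat.{u} R)) [P.IsClosedUnderFiniteProducts]
    [P.IsClosedUnderKernels] [P.IsClosedUnderCokernels]
    {M : Type u} [AddCommGroup M] [Module R M] (hM : P (ModuleCat.of R M))
    (N : Type u) [AddCommGroup N] [Module R N] [Module.Finite R N] (n : ℕ) :
    P (((Tor (ModuleCat R) n).obj (ModuleCat.of R N)).obj (ModuleCat.of R M)) ∧
      P (((Ext R (ModuleCat R) n).obj (op (ModuleCat.of R N))).obj (ModuleCat.of R M)) :=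
  ⟨prop_tor P hM N n, prop_ext P hM N n⟩

theorem stmt_18 (R : Type) [CommRing R] [IsNoetherianRing R] (I : Ideal R)
    (habelian : ∀ (M N : Type) [AddCommGroup M] [Module R M] [AddCommGroup N]
      [Module R N] (f : M →ₗ[R] N), IsCofinite R I M → IsCofinite R I N →
      IsCofinite R I (LinearMap.ker f) ∧ IsCofinite R I (N ⧸ LinearMap.range f))
    (M N : Type) [AddCommGroup M] [Module R M] [AddCommGroup N] [Module R N]
    (hM : IsCofinite R I M) (hN : Module.Finite R N) :
    ∀ i : ℕ,
      IsCofinite R I (((Tor (ModuleCat R) i).obj (ModuleCat.of R N)).obj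
        (ModuleCat.of R M)) ∧
      IsCofinite R I (((Ext R (ModuleCat R) i).obj
        (Opposite.op (ModuleCat.of R N))).obj (ModuleCat.of R M)) := by
  have : (isCofinite I).IsClosedUnderKernels :=
    isClosedUnderKernels_of_ker fun _ _ f hX hY => (habelian _ _ f.hom hX hY).1
  have : (isCofinite I).IsClosedUnderCokernels :=
    isClosedUnderCokernels_of_quotient_range fun _ _ f hX hY => (habelian _ _ f.hom hX hY).2
  exact stmt_18_general (isCofinite I) hM N
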